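/- arXiv:2205.13330 — 4 statements merged into one kernel-verified Lean document; each statement's English description precedes it below -/
import Mathlib

section
/- Let B, C, T be positive reals with T > 1 and let b₀ be a positive real with C·b₀ ≠ B. Under the linear cost function f(b) = C·b, the budget-pacing update produces b₁ = b₀·(B − C·b₀)/(C·b₀·T) = (B − C·b₀)/(C·T), and the next update b₂ = b₁·(B − C·b₀ − C·b₁)/(C·b₁·(T − 1)) satisfies b₂ = b₁. That is, the algorithm reaches a fixed bid value in exactly one iteration. -/
/-- **Linear cost: one-iteration convergence.**
Under the linear cost function `f b = C * b`, the budget-pacing update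
`b_{t+1} = b_t * (B - Σ_{i≤t} c_i) / (c_t * (T - t))` produces
`b₁ = b₀ * (B - C*b₀) / (C*b₀*T) = (B - C*b₀)/(C*T)`, and the next update
`b₂ = b₁ * (B - C*b₀ - C*b₁) / (C*b₁*(T-1))` satisfies `b₂ = b₁`:
a fixed bid value is reached in exactly one iteration. -/
theorem linear_cost_one_iteration_convergence
    (B C T b₀ : ℝ) (hB : 0 < B) (hC : 0 < C) (hT : 1 < T) (hb₀ : 0 < b₀)
    (hne : C * b₀ ≠ B)
    (b₁ b₂ : ℝ)
    (hb₁ : b₁ = b₀ * (B - C * b₀) / (C * b₀ * T))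
    (hb₂ : b₂ = b₁ * (B - C * b₀ - C * b₁) / (C * b₁ * (T - 1))) :
    b₁ = (B - C * b₀) / (C * T) ∧ b₂ = b₁ := by
  have hT₀ : T ≠ 0 := by linarith
  have hT₁ : T - 1 ≠ 0 := by linarith
  have h₁ : b₁ = (B - C * b₀) / (C * T) := by
    rw [hb₁]
    field_simp
  -- The budget left after period 0 is exactly `T` payments of `C * b₁`.
  have hrem : B - C * b₀ = C * T * b₁ := by
    rw [h₁]
    field_simp
  -- `C * b₀ ≠ B` gives `b₁ ≠ 0`, so the second update divides by a nonzero cost.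
  have hb₁_ne : b₁ ≠ 0 := by
    rw [h₁]
    exact div_ne_zero (sub_ne_zero.mpr hne.symm) (mul_ne_zero hC.ne' hT₀)
  refine ⟨h₁, ?_⟩
  rw [hb₂, hrem, div_eq_iff (mul_ne_zero (mul_ne_zero hC.ne' hb₁_ne) hT₁)]
  ring
end

section
/- Let B, C, T, M be positive reals with T > 1, and let b₀ > 0 satisfy C·b₀ < M, C·b₀ ≠ B, and (B − C·b₀)/T < M. Under the semi-linear cost function f(b) = min(C·b, M), the budget-pacing update produces b₁ = b₀·(B − min(C·b₀, M))/(min(C·b₀, M)·T) = (B − C·b₀)/(C·T), and the next update b₂ = b₁·(B − min(C·b₀, M) − min(C·b₁, M))/(min(C·b₁, M)·(T − 1)) satisfies b₂ = b₁. That is, with guard rail M the algorithm reaches a fixed bid value in exactly one iteration. -/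
/-!
Both minima are attained by the linear branch: `C * b₀ < M` by assumption, and after the first
update `C * b₁ = (B - C * b₀) / T < M`. So the first update sets the cost to the remaining budget
divided by the remaining time, and spending at that rate leaves `(T - 1) * (C * b₁)`, which makes
the second update factor equal to `1`. The condition `C * b₀ ≠ B` guarantees `C * b₁ ≠ 0`, so that
this factor is a genuine quotient.
-/


/-- **Semi-linear cost: one-iteration convergence.**
Under the semi-linear cost function `f b = min (C * b) M` (guard rail `M`),
the budget-pacing update produces
`b₁ = b₀ * (B - min (C*b₀) M) / (min (C*b₀) M * T) = (B - C*b₀)/(C*T)`, and the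
next update `b₂ = b₁ * (B - min (C*b₀) M - min (C*b₁) M) / (min (C*b₁) M * (T-1))`
satisfies `b₂ = b₁`: a fixed bid value is reached in exactly one iteration. -/
theorem semilinear_cost_one_iteration_convergence
    (B C T M b₀ : ℝ) (hB : 0 < B) (hC : 0 < C) (hT : 1 < T) (hM : 0 < M)
    (hb₀ : 0 < b₀) (hcap₀ : C * b₀ < M) (hne : C * b₀ ≠ B)
    (hcap₁ : (B - C * b₀) / T < M)
    (b₁ b₂ : ℝ)
    (hb₁ : b₁ = b₀ * (B - min (C * b₀) M) / (min (C * b₀) M * T))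
    (hb₂ : b₂ = b₁ * (B - min (C * b₀) M - min (C * b₁) M) /
      (min (C * b₁) M * (T - 1))) :
    b₁ = (B - C * b₀) / (C * T) ∧ b₂ = b₁ := by
  have hT0 : T ≠ 0 := by positivity
  have hT1 : T - 1 ≠ 0 := by linarith
  rw [min_eq_left hcap₀.le] at hb₁ hb₂
  have h₁ : b₁ = (B - C * b₀) / (C * T) := by
    rw [hb₁]
    field_simp
  have hcost : C * b₁ = (B - C * b₀) / T := by
    rw [h₁]
    field_simp
  have hcost_ne : C * b₁ ≠ 0 := by
    rw [hcost]
    exact div_ne_zero (sub_ne_zero.mpr hne.symm) hT0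
  have hbudget : B - C * b₀ - C * b₁ = C * b₁ * (T - 1) := by
    rw [hcost]
    field_simp
  have hmin : min (C * b₁) M = C * b₁ := min_eq_left (hcost ▸ hcap₁.le)
  refine ⟨h₁, ?_⟩
  rw [hb₂, hmin, hbudget, mul_div_cancel_right₀ _ (mul_ne_zero hcost_ne hT1)]
end

section
/- Let B', C, k be positive reals and let T, t be reals with T − t > 0, and set b* = (B'/(C·(T − t + 1)))^{1/k}. Then the derivative of the map G(b) = b·(B' − C·b^k)/(C·b^k·(T − t)) at its unique positive fixed point b* equals 1 − k·(T − t + 1)/(T − t). -/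
/-! With `n = T - t` and `y = b ^ k = B' / (C * (n + 1))`, the fixed-point equation reads
`B' = C * y * (n + 1)`, and `x ^ k` has derivative `k * y / b` at `b`. Substituting both into
the quotient rule leaves a rational identity in `C`, `n`, `k`, `y`, `b`. -/

/-- **Derivative of the update map at its fixed point.**
For `B', C, k > 0` and `T - t > 0`, the derivative of
`G b = b * (B' - C * b^k) / (C * b^k * (T - t))` at its unique positive fixed
point `b* = (B' / (C * (T - t + 1)))^(1/k)` equals `1 - k*(T - t + 1)/(T - t)`. -/
theorem deriv_update_map_at_fixed_point
    (B' C T t k : ℝ) (hB : 0 < B') (hC : 0 < C) (hk : 0 < k)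
    (hTt : 0 < T - t) :
    HasDerivAt (fun x : ℝ => x * (B' - C * x ^ k) / (C * x ^ k * (T - t)))
      (1 - k * (T - t + 1) / (T - t))
      ((B' / (C * (T - t + 1))) ^ (1 / k)) := by
  generalize T - t = n at *
  have hy : 0 < B' / (C * (n + 1)) := by positivity
  have hb : 0 < (B' / (C * (n + 1))) ^ (1 / k) := Real.rpow_pos_of_pos hy _
  have hbk : ((B' / (C * (n + 1))) ^ (1 / k)) ^ k = B' / (C * (n + 1)) := by
    rw [← Real.rpow_mul hy.le, one_div_mul_cancel hk.ne', Real.rpow_one]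
  have hBy : B' = C * (B' / (C * (n + 1))) * (n + 1) := by field_simp
  generalize B' / (C * (n + 1)) = y at *
  generalize y ^ (1 / k) = b at *
  have hd : HasDerivAt (fun x : ℝ => x ^ k) (k * (y / b)) b := by
    have h := Real.hasDerivAt_rpow_const (p := k) (Or.inl hb.ne')
    rwa [Real.rpow_sub_one hb.ne', hbk] at h
  have hden : C * b ^ k * n ≠ 0 := by rw [hbk]; positivity
  refine (((hasDerivAt_id' b).mul ((hd.const_mul C).const_sub B')).div
    ((hd.const_mul C).mul_const n) hden).congr_deriv ?_
  simp only [hbk, Pi.mul_apply]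
  rw [hBy]
  field_simp
  ring
end

section
/- Let c, B, M, k be positive reals and T a real with T ≥ 2 and B > M. Set D = B − M − M·T + M·T² (so D > 0), b₋ = ((B − M)²/(c·D))^{1/k}, and b₊ = (M·T/(B − M))·b₋. Assume the guard rail binds at b₊ and not at b₋, i.e. c·b₊^k ≥ M and c·b₋^k ≤ M. Then the guard-railed budget-pacing updates form a 2-cycle: the update from b₊ at period 0, namely b₊·(B − min(c·b₊^k, M))/(min(c·b₊^k, M)·T), equals b₋; and the subsequent update from b₋ at period 1, namely b₋·(B − min(c·b₊^k, M) − min(c·b₋^k, M))/(min(c·b₋^k, M)·(T − 1)), equals b₊. Hence the algorithm oscillates between the two average bid values b₋ and b₊. -/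
/-!
Since the guard rail binds at `b₊` and not at `b₋`, the two costs are `M` and
`c * b₋ ^ k = (B - M)² / D`. The first update is then immediate from `b₊ / b₋ = M T / (B - M)`.
The second reduces to `(D - (B - M)) / ((B - M) (T - 1)) = M T / (B - M)`, which holds because
`D - (B - M) = M T (T - 1)`.
-/


/-- **Period-two cycle under the guard rail.**
For `c, B, M, k > 0`, `T ≥ 2`, `B > M`, with `D = B - M - M*T + M*T²`,
`b₋ = ((B - M)²/(c*D))^(1/k)` and `b₊ = (M*T/(B - M)) * b₋`, if the guard rail
binds at `b₊` (`c*b₊^k ≥ M`) and not at `b₋` (`c*b₋^k ≤ M`), then the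
guard-railed budget-pacing updates form a 2-cycle: the update from `b₊` at
period 0 equals `b₋`, and the subsequent update from `b₋` at period 1 equals
`b₊`. -/
theorem guard_rail_two_cycle
    (c B M k T : ℝ) (hc : 0 < c) (hB : 0 < B) (hM : 0 < M) (hk : 0 < k)
    (hT : 2 ≤ T) (hBM : M < B)
    (D bm bp : ℝ)
    (hD : D = B - M - M * T + M * T ^ 2)
    (hbm : bm = ((B - M) ^ 2 / (c * D)) ^ (1 / k))
    (hbp : bp = M * T / (B - M) * bm)
    (hbindp : M ≤ c * bp ^ k) (hbindm : c * bm ^ k ≤ M) :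
    bp * (B - min (c * bp ^ k) M) / (min (c * bp ^ k) M * T) = bm ∧
    bm * (B - min (c * bp ^ k) M - min (c * bm ^ k) M) /
      (min (c * bm ^ k) M * (T - 1)) = bp := by
  have hBM' : 0 < B - M := sub_pos.mpr hBM
  have hT1 : 0 < T - 1 := by linarith
  have hT0 : 0 < T := by linarith
  have hDfac : D = (B - M) + M * T * (T - 1) := by rw [hD]; ring
  have hDpos : 0 < D := by rw [hDfac]; positivity
  have hcost : c * bm ^ k = (B - M) ^ 2 / D := by
    rw [hbm, one_div, Real.rpow_inv_rpow (by positivity) hk.ne']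
    field_simp
  rw [min_eq_right hbindp, min_eq_left hbindm, hcost, hbp]
  have hBMne := hBM'.ne'
  have hT1ne := hT1.ne'
  constructor
  · field_simp
  · have hrem : B - M - (B - M) ^ 2 / D = (B - M) * (M * T * (T - 1)) / D := by
      rw [eq_div_iff hDpos.ne', sub_mul, div_mul_cancel₀ _ hDpos.ne', hDfac]
      ring
    rw [hrem]
    field_simp
end
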